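/- arXiv:2504.18302 — 3 statements merged into one kernel-verified Lean document; each statement's English description precedes it below -/
import Mathlib

section
/- Let G=(V,E) be a graph, let S ⊆ V, and let (L^S, X^S, R^S) be a partition of S into (possibly empty) parts. Then (L^S, X^S, R^S) is an S-trace of G if and only if there is no path in the graph G[S] − X^S from a vertex of L^S to a vertex of R^S. -/
/-! Preliminary definitions: rooted tree decompositions, `S`-traces, `S`-nice and
slim tree decompositions, following Chapelle et al. -/

/-- A walk in `G` all of whose vertices lie in the set `W`. -/
def SimpleGraph.ReachableIn {V : Type} (G : SimpleGraph V) (W : Set V) (u v : V) : Prop :=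
  ∃ p : G.Walk u v, ∀ x ∈ p.support, x ∈ W

/-- The open neighborhood of a set of vertices. -/
def SimpleGraph.nbhdSet {V : Type} (G : SimpleGraph V) (W : Set V) : Set V :=
  {x | x ∉ W ∧ ∃ w ∈ W, G.Adj w x}

/-- The vertex set of the connected component of `G − X` that contains `v`
(assuming `v ∉ X`). -/
def SimpleGraph.compOutside {V : Type} (G : SimpleGraph V) (X : Set V) (v : V) : Set V :=
  {w | G.ReachableIn Xᶜ v w}

/-- A rooted tree decomposition of a graph `G` on vertex type `V`, with node type `ι`.
The rooted tree is given by a parent function: the root is a fixed point of `parent`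
and every node reaches the root by iterating `parent`.  The bags satisfy the three
usual conditions of a tree decomposition; connectedness of `{t | v ∈ bag t}` is
expressed by the existence of a highest node `m` containing `v` such that from any
node whose bag contains `v` the whole ancestor chain up to `m` contains `v`. -/
structure RootedTreeDecomp (V ι : Type) (G : SimpleGraph V) where
  root : ι
  parent : ι → ι
  parent_root : parent root = root
  reaches_root : ∀ t : ι, ∃ n : ℕ, parent^[n] t = root
  bag : ι → Set V
  bags_cover : ∀ v : V, ∃ t : ι, v ∈ bag t
  bags_of_edges : ∀ ⦃u v : V⦄, G.Adj u v → ∃ t : ι, u ∈ bag t ∧ v ∈ bag t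
  bags_connected : ∀ v : V, ∃ m : ι, v ∈ bag m ∧
    ∀ t : ι, v ∈ bag t → ∃ n : ℕ, parent^[n] t = m ∧ ∀ i ≤ n, v ∈ bag (parent^[i] t)

namespace RootedTreeDecomp

variable {V ι : Type} {G : SimpleGraph V}

/-- `t'` lies in the subtree `T_t` rooted at `t`; equivalently, `t` is an
ancestor (possibly equal) of `t'`. -/
def InSubtree (𝒯 : RootedTreeDecomp V ι G) (t t' : ι) : Prop :=
  ∃ n : ℕ, 𝒯.parent^[n] t' = t

/-- `t` is the parent of `t'`. -/
def IsParent (𝒯 : RootedTreeDecomp V ι G) (t t' : ι) : Prop :=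
  t' ≠ 𝒯.root ∧ 𝒯.parent t' = t

/-- `V_t`: the union of the bags of the nodes of the subtree rooted at `t`. -/
def Vt (𝒯 : RootedTreeDecomp V ι G) (t : ι) : Set V :=
  {v | ∃ t', 𝒯.InSubtree t t' ∧ v ∈ 𝒯.bag t'}

/-- `L_t = V_t ∖ X_t`. -/
def Lt (𝒯 : RootedTreeDecomp V ι G) (t : ι) : Set V := 𝒯.Vt t \ 𝒯.bag t

/-- `R_t = V ∖ V_t`. -/
def Rt (𝒯 : RootedTreeDecomp V ι G) (t : ι) : Set V := (𝒯.Vt t)ᶜ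

/-- `L_t^S = L_t ∩ S`. -/
def LS (𝒯 : RootedTreeDecomp V ι G) (S : Set V) (t : ι) : Set V := 𝒯.Lt t ∩ S

/-- `X_t^S = X_t ∩ S`. -/
def XS (𝒯 : RootedTreeDecomp V ι G) (S : Set V) (t : ι) : Set V := 𝒯.bag t ∩ S

/-- `R_t^S = R_t ∩ S`. -/
def RS (𝒯 : RootedTreeDecomp V ι G) (S : Set V) (t : ι) : Set V := 𝒯.Rt t ∩ S

/-- The `S`-trace of a node `t`. -/
def STrace (𝒯 : RootedTreeDecomp V ι G) (S : Set V) (t : ι) : Set V × Set V × Set V :=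
  (𝒯.LS S t, 𝒯.XS S t, 𝒯.RS S t)

/-- Every bag has size at most `k + 1`, i.e. the width is at most `k`. -/
def WidthAtMost (𝒯 : RootedTreeDecomp V ι G) (k : ℕ) : Prop :=
  ∀ t : ι, (𝒯.bag t).ncard ≤ k + 1

/-- The width of the decomposition (max bag size minus one) is exactly `k`. -/
def HasWidth (𝒯 : RootedTreeDecomp V ι G) (k : ℕ) : Prop :=
  𝒯.WidthAtMost k ∧ ∃ t : ι, (𝒯.bag t).ncard = k + 1

/-- `t'` is an `S`-child of `t`. -/
def IsSChild (𝒯 : RootedTreeDecomp V ι G) (S : Set V) (t t' : ι) : Prop :=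
  𝒯.IsParent t t' ∧ ((𝒯.LS S t' ∪ 𝒯.XS S t') \ (𝒯.RS S t ∪ 𝒯.XS S t)).Nonempty

/-- `t` is an `S`-bottom node: `L_t^S ≠ ∅` and `t` is the bottom node of the
directed path of its own `S`-trace (every node with the same `S`-trace is an
ancestor of `t`). -/
def IsSBottom (𝒯 : RootedTreeDecomp V ι G) (S : Set V) (t : ι) : Prop :=
  (𝒯.LS S t).Nonempty ∧ ∀ t', 𝒯.STrace S t' = 𝒯.STrace S t → 𝒯.InSubtree t' t

/-- `t` admits the `S`-operation `introduce(v)`. -/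
def AdmitsIntroduce (𝒯 : RootedTreeDecomp V ι G) (S : Set V) (t : ι) (v : V) : Prop :=
  ∃ t₁, 𝒯.IsSChild S t t₁ ∧ (∀ t₂, 𝒯.IsSChild S t t₂ → t₂ = t₁) ∧
    v ∈ S ∧ v ∉ 𝒯.bag t₁ ∧ 𝒯.XS S t = 𝒯.XS S t₁ ∪ {v}

/-- `t` admits the `S`-operation `forget(v)`. -/
def AdmitsForget (𝒯 : RootedTreeDecomp V ι G) (S : Set V) (t : ι) (v : V) : Prop :=
  ∃ t₁, 𝒯.IsSChild S t t₁ ∧ (∀ t₂, 𝒯.IsSChild S t t₂ → t₂ = t₁) ∧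
    v ∈ S ∧ v ∈ 𝒯.bag t₁ ∧ 𝒯.XS S t = 𝒯.XS S t₁ \ {v}

/-- `t` admits the `S`-operation `join` with the two `S`-children `t₁, t₂`. -/
def AdmitsJoin (𝒯 : RootedTreeDecomp V ι G) (S : Set V) (t t₁ t₂ : ι) : Prop :=
  t₁ ≠ t₂ ∧ 𝒯.IsSChild S t t₁ ∧ 𝒯.IsSChild S t t₂ ∧
    (∀ t₃, 𝒯.IsSChild S t t₃ → t₃ = t₁ ∨ t₃ = t₂) ∧
    𝒯.XS S t₁ ∪ 𝒯.XS S t₂ ⊆ 𝒯.XS S t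

/-- `S`-nice tree decomposition: bags along tree edges are comparable and differ in
size by at most one, and every `S`-bottom node admits one of the `S`-operations. -/
def IsSNice (𝒯 : RootedTreeDecomp V ι G) (S : Set V) : Prop :=
  (∀ t t' : ι, 𝒯.IsParent t' t →
      (𝒯.bag t ⊆ 𝒯.bag t' ∨ 𝒯.bag t' ⊆ 𝒯.bag t) ∧
      (𝒯.bag t).ncard ≤ (𝒯.bag t').ncard + 1 ∧ (𝒯.bag t').ncard ≤ (𝒯.bag t).ncard + 1) ∧
  ∀ t : ι, 𝒯.IsSBottom S t →
    (∃ v, 𝒯.AdmitsIntroduce S t v) ∨ (∃ v, 𝒯.AdmitsForget S t v) ∨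
      (∃ t₁ t₂, 𝒯.AdmitsJoin S t t₁ t₂)

/-- Nice tree decomposition: root and leaves have empty bags, and every internal
node is an introduce, forget, or join node. -/
def IsNice (𝒯 : RootedTreeDecomp V ι G) : Prop :=
  𝒯.bag 𝒯.root = ∅ ∧
  (∀ t : ι, (∀ t', ¬𝒯.IsParent t t') → 𝒯.bag t = ∅) ∧
  ∀ t : ι, (∃ t', 𝒯.IsParent t t') →
    (∃ t', 𝒯.IsParent t t' ∧ (∀ t'', 𝒯.IsParent t t'' → t'' = t') ∧
      ((∃ v, v ∉ 𝒯.bag t' ∧ 𝒯.bag t = 𝒯.bag t' ∪ {v}) ∨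
        (∃ v, v ∈ 𝒯.bag t' ∧ 𝒯.bag t = 𝒯.bag t' \ {v}))) ∨
    (∃ t₁ t₂, t₁ ≠ t₂ ∧ 𝒯.IsParent t t₁ ∧ 𝒯.IsParent t t₂ ∧
      (∀ t₃, 𝒯.IsParent t t₃ → t₃ = t₁ ∨ t₃ = t₂) ∧
      𝒯.bag t = 𝒯.bag t₁ ∧ 𝒯.bag t = 𝒯.bag t₂)

/-- A set of nodes inducing a connected subtree of the tree: it contains a node `m`
such that from every node of the set the whole ancestor chain up to `m` stays in
the set. -/
def ConnectedNodeSet (𝒯 : RootedTreeDecomp V ι G) (A : Set ι) : Prop :=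
  ∃ m ∈ A, ∀ t ∈ A, ∃ n : ℕ, 𝒯.parent^[n] t = m ∧ ∀ i ≤ n, 𝒯.parent^[i] t ∈ A

/-- A full join tree: a non-trivial inclusion-maximal connected set of nodes all of
which share one and the same full bag `X` (of size `k + 1`). -/
def IsFullJoinTree (𝒯 : RootedTreeDecomp V ι G) (k : ℕ) (A : Set ι) (X : Set V) : Prop :=
  A.Nontrivial ∧ 𝒯.ConnectedNodeSet A ∧ X.ncard = k + 1 ∧ (∀ t ∈ A, 𝒯.bag t = X) ∧
  ∀ A' : Set ι, A ⊆ A' → 𝒯.ConnectedNodeSet A' → (∀ t ∈ A', 𝒯.bag t = X) → A' = A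

/-- `m` is the root (top node) of the node set `A`. -/
def IsTopOf (𝒯 : RootedTreeDecomp V ι G) (A : Set ι) (m : ι) : Prop :=
  m ∈ A ∧ ∀ t ∈ A, 𝒯.InSubtree m t

/-- The condition on a pair `(u, ti)` appearing in condition (7) of slimness:
either `ti` belongs to `T'_C` (it is an `S`-child of a node of the full join tree
`A` but is not itself in `A`) and `u ∈ V_{ti}`, or `ti` is the parent of the root
`tr` of the full join tree and `u ∈ V ∖ V_{tr}`. -/
def FullJoinBranch (𝒯 : RootedTreeDecomp V ι G) (S : Set V) (A : Set ι) (tr : ι)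
    (u : V) (ti : ι) : Prop :=
  (ti ∉ A ∧ (∃ ta ∈ A, 𝒯.IsSChild S ta ti) ∧ u ∈ 𝒯.Vt ti) ∨
  (tr ≠ 𝒯.root ∧ ti = 𝒯.parent tr ∧ u ∉ 𝒯.Vt tr)

/-- Slim `S`-nice tree decomposition of width `k` (the seven conditions of the
paper; a bag is *full* if it has size `k + 1`). -/
def IsSlim (𝒯 : RootedTreeDecomp V ι G) (S : Set V) (k : ℕ) : Prop :=
  -- (1) the root is not an S-bottom node
  (¬𝒯.IsSBottom S 𝒯.root) ∧
  -- (2) S-bottom nodes with two S-children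
  (∀ t t₁ t₂ : ι, 𝒯.IsSBottom S t → t₁ ≠ t₂ → 𝒯.IsSChild S t t₁ → 𝒯.IsSChild S t t₂ →
    (∃ A X, 𝒯.IsFullJoinTree k A X ∧ t ∈ A) ∨
      ((𝒯.bag t₁).ncard ≠ k + 1 ∧ (𝒯.bag t₂).ncard ≠ k + 1 ∧
        (𝒯.bag t₁).ncard ≤ (𝒯.bag t).ncard ∧ (𝒯.bag t₂).ncard ≤ (𝒯.bag t).ncard ∧
        ∀ tp, 𝒯.IsParent tp t →
          (𝒯.bag tp).ncard ≠ k + 1 ∧ (𝒯.bag tp).ncard ≤ (𝒯.bag t).ncard)) ∧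
  -- (3) S-bottom nodes with a non-full bag
  (∀ t tp : ι, 𝒯.IsSBottom S t → (𝒯.bag t).ncard ≠ k + 1 → 𝒯.IsParent tp t →
    𝒯.bag t = 𝒯.bag tp ∧ ∀ t'', 𝒯.IsSChild S tp t'' → t'' = t) ∧
  -- (4) S-bottom nodes admitting forget(v)
  (∀ t v t', 𝒯.IsSBottom S t → 𝒯.AdmitsForget S t v → 𝒯.IsSChild S t t' →
    (𝒯.bag t').ncard ≠ k + 1 →
    (∀ t₁ t₂, 𝒯.IsSChild S t' t₁ → 𝒯.IsSChild S t' t₂ → t₁ = t₂) ∧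
      ∀ t'', 𝒯.IsSChild S t' t'' → 𝒯.bag t' = 𝒯.bag t'') ∧
  -- (5) parents of S-bottom nodes with non-full bags
  (∀ t tp, 𝒯.IsSBottom S t → 𝒯.IsParent tp t → (𝒯.bag tp).ncard ≠ k + 1 →
    tp = 𝒯.root ∨ ∀ tpp, 𝒯.IsParent tpp tp → ¬𝒯.IsSBottom S tpp) ∧
  -- (6) nodes of full join trees
  (∀ A X, 𝒯.IsFullJoinTree k A X → ∀ t ∈ A,
    𝒯.IsSBottom S t ∧ ∃ t₁ t₂, t₁ ≠ t₂ ∧ 𝒯.IsSChild S t t₁ ∧ 𝒯.IsSChild S t t₂) ∧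
  -- (7) branching condition of full join trees
  (∀ A X tr, 𝒯.IsFullJoinTree k A X → 𝒯.IsTopOf A tr →
    ∀ v ∈ X \ S, ∃ u₁ u₂ u₃ : V, ∃ t₁ t₂ t₃ : ι,
      u₁ ≠ u₂ ∧ u₁ ≠ u₃ ∧ u₂ ≠ u₃ ∧ t₁ ≠ t₂ ∧ t₁ ≠ t₃ ∧ t₂ ≠ t₃ ∧
      (G.Adj v u₁ ∧ u₁ ∉ X ∧ (∃ s ∈ S, G.ReachableIn Xᶜ u₁ s) ∧
        𝒯.FullJoinBranch S A tr u₁ t₁) ∧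
      (G.Adj v u₂ ∧ u₂ ∉ X ∧ (∃ s ∈ S, G.ReachableIn Xᶜ u₂ s) ∧
        𝒯.FullJoinBranch S A tr u₂ t₂) ∧
      (G.Adj v u₃ ∧ u₃ ∉ X ∧ (∃ s ∈ S, G.ReachableIn Xᶜ u₃ s) ∧
        𝒯.FullJoinBranch S A tr u₃ t₃))

end RootedTreeDecomp

/-- `tw(G) ≤ k`: `G` admits a (rooted) tree decomposition of width at most `k`. -/
def SimpleGraph.TreewidthAtMost {V : Type} (G : SimpleGraph V) (k : ℕ) : Prop :=
  ∃ (ι : Type) (𝒯 : RootedTreeDecomp V ι G), 𝒯.WidthAtMost k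

theorem RootedTreeDecomp.no_edge {V ι : Type} {G : SimpleGraph V}
    (T : RootedTreeDecomp V ι G) (t : ι) {u v : V} (hu : u ∈ T.Lt t) (hv : v ∈ T.Rt t)
    (h : G.Adj u v) : False := by
  obtain ⟨⟨t', ⟨j, hj⟩, hut'⟩, hut⟩ := hu
  obtain ⟨s, hus, hvs⟩ := T.bags_of_edges h
  obtain ⟨m, hm, hc⟩ := T.bags_connected u
  obtain ⟨n, hn, hch⟩ := hc t' hut'
  obtain ⟨k, hk, -⟩ := hc s hus
  rcases Nat.lt_or_ge n j with hlt | hge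
  · refine hv ⟨s, ⟨(j - n) + k, ?_⟩, hvs⟩
    rw [Function.iterate_add_apply, hk, ← hn, ← Function.iterate_add_apply,
      Nat.sub_add_cancel hlt.le, hj]
  · exact hut (hj ▸ hch j hge)

/-- The three-node path decomposition used for the converse direction. -/
def threeNode {V : Type} (G : SimpleGraph V) (L R : Set V) (hLR : Disjoint L R)
    (hE : ∀ u ∈ L, ∀ v ∈ R, ¬ G.Adj u v) : RootedTreeDecomp V (Fin 3) G where
  root := 0
  parent := ![0, 0, 1]
  parent_root := rfl
  reaches_root := fun t => ⟨2, by fin_cases t <;> rfl⟩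
  bag := ![Lᶜ, (L ∪ R)ᶜ, Rᶜ]
  bags_cover := by
    intro v
    by_cases hv : v ∈ L
    · exact ⟨2, fun h => hLR.le_bot ⟨hv, h⟩⟩
    · exact ⟨0, hv⟩
  bags_of_edges := by
    intro u v h
    by_cases hu : u ∈ L
    · exact ⟨2, fun h' => hLR.le_bot ⟨hu, h'⟩, fun h' => hE u hu v h' h⟩
    · by_cases hv : v ∈ L
      · exact ⟨2, fun h' => hE v hv u h' h.symm, fun h' => hLR.le_bot ⟨hv, h'⟩⟩
      · exact ⟨0, hu, hv⟩
  bags_connected := by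
    intro v
    by_cases hv : v ∈ L
    · refine ⟨2, fun h => hLR.le_bot ⟨hv, h⟩, ?_⟩
      intro t ht
      fin_cases t
      · exact absurd hv ht
      · exact absurd (Or.inl hv) ht
      · refine ⟨0, rfl, ?_⟩
        intro i hi
        obtain rfl : i = 0 := by omega
        exact ht
    · refine ⟨0, hv, ?_⟩
      intro t ht
      fin_cases t
      · refine ⟨0, rfl, ?_⟩
        intro i hi
        obtain rfl : i = 0 := by omega
        exact ht
      · refine ⟨1, rfl, ?_⟩
        intro i hi
        interval_cases i
        · exact ht
        · exact hv
      · refine ⟨2, rfl, ?_⟩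
        intro i hi
        interval_cases i
        · exact ht
        · exact fun h => h.elim hv ht
        · exact hv

theorem threeNode_Vt {V : Type} (G : SimpleGraph V) (L R : Set V) (hLR : Disjoint L R)
    (hE : ∀ u ∈ L, ∀ v ∈ R, ¬ G.Adj u v) : (threeNode G L R hLR hE).Vt 1 = Rᶜ := by
  ext v
  constructor
  · rintro ⟨t, ⟨n, hn⟩, hv⟩
    fin_cases t
    · exfalso
      have : ∀ n : ℕ, (threeNode G L R hLR hE).parent^[n] 0 = 0 :=
        fun n => Function.iterate_fixed rfl n
      exact absurd ((this n).symm.trans hn) (by decide)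
    · exact fun h => hv (Or.inr h)
    · exact hv
  · intro hv
    exact ⟨2, ⟨1, rfl⟩, hv⟩

/-- A partition `(L, X, R)` of `S` is an `S`-trace of `G` if and
only if there is no path from a vertex of `L` to a vertex of `R` in `G[S] − X`. -/
theorem statement1 {V : Type} [Fintype V] [DecidableEq V] (G : SimpleGraph V)
    (S L X R : Set V)
    (hLX : Disjoint L X) (hLR : Disjoint L R) (hXR : Disjoint X R)
    (hUnion : L ∪ X ∪ R = S) :
    (∃ (ι : Type) (𝒯 : RootedTreeDecomp V ι G) (t : ι),
        𝒯.LS S t = L ∧ 𝒯.XS S t = X ∧ 𝒯.RS S t = R) ↔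
      ¬∃ l ∈ L, ∃ r ∈ R, G.ReachableIn (S \ X) l r := by
  have hdLX : ∀ v, v ∈ L → v ∈ X → False := fun v a b => hLX.le_bot ⟨a, b⟩
  have hdLR : ∀ v, v ∈ L → v ∈ R → False := fun v a b => hLR.le_bot ⟨a, b⟩
  have hdXR : ∀ v, v ∈ X → v ∈ R → False := fun v a b => hXR.le_bot ⟨a, b⟩
  have hS : ∀ v, v ∈ S ↔ (v ∈ L ∨ v ∈ X) ∨ v ∈ R := by
    intro v
    rw [← hUnion]
    rfl
  constructor
  · rintro ⟨ι, T, t, hL, -, hR⟩ ⟨l, hl, r, hr, p, hp⟩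
    have key : ∀ {a b : V} (p : G.Walk a b), (∀ x ∈ p.support, x ∈ S \ X) → a ∈ L → b ∈ L := by
      intro a b p
      induction p with
      | nil => exact fun _ h => h
      | @cons a c b h q ih =>
        intro hp ha
        have hc : c ∈ S \ X := hp c (by simp)
        refine ih (fun x hx => hp x (by simp [hx])) ?_
        rcases (hS c).1 hc.1 with (h1 | h1) | h1
        · exact h1
        · exact absurd h1 hc.2
        · rw [← hL] at ha
          rw [← hR] at h1
          exact (T.no_edge t ha.1 h1.1 h).elim
    exact hdLR r (key p hp hl) hr
  · intro h
    have hE : ∀ u ∈ L, ∀ v ∈ R, ¬ G.Adj u v := by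
      intro u hu v hv ha
      refine h ⟨u, hu, v, hv, ha.toWalk, ?_⟩
      intro x hx
      have : x = u ∨ x = v := by simpa using hx
      rcases this with rfl | rfl
      · exact ⟨(hS _).2 (Or.inl (Or.inl hu)), hdLX _ hu⟩
      · exact ⟨(hS _).2 (Or.inr hv), fun hx => hdXR _ hx hv⟩
    refine ⟨Fin 3, threeNode G L R hLR hE, 1, ?_, ?_, ?_⟩
    · rw [RootedTreeDecomp.LS, RootedTreeDecomp.Lt, threeNode_Vt]
      change (Rᶜ \ (L ∪ R)ᶜ) ∩ S = L
      ext v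
      have := hS v
      have := hdLR v
      simp only [Set.mem_inter_iff, Set.mem_sdiff, Set.mem_compl_iff, Set.mem_union]
      tauto
    · change (L ∪ R)ᶜ ∩ S = X
      ext v
      have := hS v
      have := hdLX v
      have := hdXR v
      simp only [Set.mem_inter_iff, Set.mem_compl_iff, Set.mem_union]
      tauto
    · rw [RootedTreeDecomp.RS, RootedTreeDecomp.Rt, threeNode_Vt]
      ext v
      have := hS v
      simp only [Set.mem_inter_iff, Set.mem_compl_iff]
      tauto
end

section
/- Let 𝒯 be a rooted tree decomposition of a graph G=(V,E), let S ⊆ V, and let (L^S, X^S, R^S) be an S-trace with L^S ≠ ∅. Let N be the set of nodes of 𝒯 whose S-trace is (L^S, X^S, R^S), and assume N ≠ ∅. Then the subgraph of T induced by N is a directed path, i.e., a path in T each of whose edges goes from a parent to its child. -/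
namespace RootedTreeDecomp

lemma aux_root_iter {V ι : Type} {G : SimpleGraph V} (𝒯 : RootedTreeDecomp V ι G) (n : ℕ) :
    𝒯.parent^[n] 𝒯.root = 𝒯.root :=
  Function.iterate_fixed 𝒯.parent_root n

lemma aux_periodic {V ι : Type} {G : SimpleGraph V} (𝒯 : RootedTreeDecomp V ι G) (n : ℕ)
    (hn : 0 < n) (s : ι) (h : 𝒯.parent^[n] s = s) : s = 𝒯.root := by
  obtain ⟨k, hk⟩ := 𝒯.reaches_root s
  have h1 : 𝒯.parent^[n * k] s = s := by
    rw [Function.iterate_mul]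
    exact Function.iterate_fixed h k
  have h2 : n * k = (n * k - k) + k := by
    have : k ≤ n * k := Nat.le_mul_of_pos_left k hn
    omega
  rw [h2, Function.iterate_add_apply, hk, aux_root_iter] at h1
  exact h1.symm

lemma aux_trans {V ι : Type} {G : SimpleGraph V} (𝒯 : RootedTreeDecomp V ι G) {a b c : ι}
    (h1 : 𝒯.InSubtree a b) (h2 : 𝒯.InSubtree b c) : 𝒯.InSubtree a c := by
  obtain ⟨n, rfl⟩ := h1
  obtain ⟨m, rfl⟩ := h2
  exact ⟨n + m, Function.iterate_add_apply _ _ _ _⟩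

lemma aux_antisymm {V ι : Type} {G : SimpleGraph V} (𝒯 : RootedTreeDecomp V ι G) {a b : ι}
    (h1 : 𝒯.InSubtree a b) (h2 : 𝒯.InSubtree b a) : a = b := by
  obtain ⟨n, hn⟩ := h1
  obtain ⟨m, hm⟩ := h2
  rcases Nat.eq_zero_or_pos n with rfl | hpos
  · exact hn.symm
  · have hb : b = 𝒯.root := aux_periodic 𝒯 (m + n) (by omega) b (by
      rw [Function.iterate_add_apply, hn, hm])
    subst hb
    rw [← hn, aux_root_iter]

lemma aux_Vt_mono {V ι : Type} {G : SimpleGraph V} (𝒯 : RootedTreeDecomp V ι G) {a b : ι}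
    (h1 : 𝒯.InSubtree a b) : 𝒯.Vt b ⊆ 𝒯.Vt a := by
  rintro v ⟨t, ht, hv⟩
  exact ⟨t, aux_trans 𝒯 h1 ht, hv⟩

lemma aux_bag_Vt {V ι : Type} {G : SimpleGraph V} (𝒯 : RootedTreeDecomp V ι G) (a : ι) :
    𝒯.bag a ⊆ 𝒯.Vt a := fun _ hv => ⟨a, ⟨0, rfl⟩, hv⟩

/-- each vertex has a top node -/
lemma aux_top {V ι : Type} {G : SimpleGraph V} (𝒯 : RootedTreeDecomp V ι G) (v : V) :
    ∃ m : ι, v ∈ 𝒯.bag m ∧ (∀ t, v ∈ 𝒯.bag t → 𝒯.InSubtree m t) ∧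
      (∀ t, v ∈ 𝒯.Lt t → 𝒯.InSubtree t m) ∧
      (∀ t c, v ∈ 𝒯.bag t → 𝒯.InSubtree c t → 𝒯.InSubtree m c → v ∈ 𝒯.bag c) := by
  obtain ⟨m, hm, h⟩ := 𝒯.bags_connected v
  refine ⟨m, hm, ?_, ?_, ?_⟩
  · intro t ht
    obtain ⟨n, hn, -⟩ := h t ht
    exact ⟨n, hn⟩
  · rintro t ⟨⟨t', ⟨k, rfl⟩, hv⟩, hnot⟩
    obtain ⟨n, hn, hall⟩ := h t' hv
    have hlt : n < k := by
      by_contra hc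
      exact hnot (hall k (by omega))
    refine ⟨k - n, ?_⟩
    rw [← hn, ← Function.iterate_add_apply]
    congr 2
    omega
  · rintro t c hv ⟨k, rfl⟩ hmc
    obtain ⟨n, hn, hall⟩ := h t hv
    by_cases hk : k ≤ n
    · exact hall k hk
    · have : 𝒯.InSubtree (𝒯.parent^[k] t) m := by
        refine ⟨k - n, ?_⟩
        rw [← hn, ← Function.iterate_add_apply]
        congr 2
        omega
      rw [aux_antisymm 𝒯 this hmc]
      exact hm

lemma aux_convex {V ι : Type} {G : SimpleGraph V} (𝒯 : RootedTreeDecomp V ι G) (S : Set V)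
    {a b c : ι} (hac : 𝒯.InSubtree c a) (hcb : 𝒯.InSubtree b c)
    (hab : 𝒯.STrace S a = 𝒯.STrace S b) : 𝒯.STrace S c = 𝒯.STrace S a := by
  have h1 := aux_Vt_mono 𝒯 hac
  have h2 := aux_Vt_mono 𝒯 hcb
  simp only [STrace, Prod.mk.injEq] at hab
  obtain ⟨hLs, hXs, hRs⟩ := hab
  have hV : ∀ x ∈ S, (x ∈ 𝒯.Vt c ↔ x ∈ 𝒯.Vt a) := by
    intro x hx
    refine ⟨fun hc => ?_, fun h => h1 h⟩
    by_contra hna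
    have : x ∈ 𝒯.RS S b := hRs ▸ (⟨hna, hx⟩ : x ∈ 𝒯.RS S a)
    exact this.1 (h2 hc)
  have hX : ∀ x ∈ S, (x ∈ 𝒯.bag c ↔ x ∈ 𝒯.bag a) := by
    intro x hx
    obtain ⟨m, hm, hup, hlow, hmid⟩ := aux_top 𝒯 x
    constructor
    · intro hc
      by_contra hna
      have hla : x ∈ 𝒯.Lt a := ⟨(hV x hx).1 (aux_bag_Vt 𝒯 c hc), hna⟩
      have e := aux_antisymm 𝒯 (hlow a hla) (aux_trans 𝒯 (hup c hc) hac)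
      exact hna (e ▸ hm)
    · intro ha
      have hb : x ∈ 𝒯.XS S b := hXs ▸ (⟨ha, hx⟩ : x ∈ 𝒯.XS S a)
      exact hmid a c ha hac (aux_trans 𝒯 (hup b hb.1) hcb)
  simp only [STrace, Prod.mk.injEq]
  refine ⟨?_, ?_, ?_⟩
  · ext x
    by_cases hx : x ∈ S <;> simp [LS, Lt, hx, hV x, hX x]
  · ext x
    by_cases hx : x ∈ S <;> simp [XS, hx, hX x]
  · ext x
    by_cases hx : x ∈ S <;> simp [RS, Rt, hx, hV x]

end RootedTreeDecomp

/-- The set of nodes of a rooted tree decomposition having a fixed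
`S`-trace `(L, X, R)` with `L ≠ ∅` induces a directed path: it is exactly the set of
iterated parents `parent^[i] tbot`, `i ≤ n`, of some node `tbot`, and these nodes
are pairwise distinct. -/
theorem statement2 {V ι : Type} [Fintype V] [DecidableEq V] {G : SimpleGraph V}
    (𝒯 : RootedTreeDecomp V ι G) (S L X R : Set V)
    (hL : L.Nonempty)
    (hN : {t : ι | 𝒯.STrace S t = (L, X, R)}.Nonempty) :
    ∃ (tbot : ι) (n : ℕ),
      (∀ i j, i ≤ n → j ≤ n → 𝒯.parent^[i] tbot = 𝒯.parent^[j] tbot → i = j) ∧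
      ∀ t : ι, 𝒯.STrace S t = (L, X, R) ↔ ∃ i ≤ n, 𝒯.parent^[i] tbot = t := by
  classical
  obtain ⟨v, hv⟩ := hL
  obtain ⟨m, -, -, hlow, -⟩ := RootedTreeDecomp.aux_top 𝒯 v
  have hanc : ∀ t, 𝒯.STrace S t = (L, X, R) → 𝒯.InSubtree t m := by
    intro t ht
    simp only [RootedTreeDecomp.STrace, Prod.mk.injEq] at ht
    have : v ∈ 𝒯.LS S t := by rw [ht.1]; exact hv
    exact hlow t this.1
  have hroot := 𝒯.reaches_root m
  obtain ⟨d, hd, hdmin⟩ : ∃ d, 𝒯.parent^[d] m = 𝒯.root ∧ ∀ i < d, 𝒯.parent^[i] m ≠ 𝒯.root :=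
    ⟨Nat.find hroot, Nat.find_spec hroot, fun i hi => Nat.find_min hroot hi⟩
  have hinj : ∀ i j, i < j → j ≤ d → 𝒯.parent^[i] m ≠ 𝒯.parent^[j] m := by
    intro i j hij hj he
    refine hdmin i (by omega) (RootedTreeDecomp.aux_periodic 𝒯 (j - i) (by omega) _ ?_)
    rw [← Function.iterate_add_apply, Nat.sub_add_cancel hij.le, he]
  have hle : ∀ t, 𝒯.STrace S t = (L, X, R) → ∃ i ≤ d, 𝒯.parent^[i] m = t := by
    intro t ht
    obtain ⟨k, rfl⟩ := hanc t ht
    rcases le_total k d with h | h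
    · exact ⟨k, h, rfl⟩
    · refine ⟨d, le_rfl, ?_⟩
      rw [← Nat.sub_add_cancel h, Function.iterate_add_apply, hd,
        RootedTreeDecomp.aux_root_iter]
  let F : Finset ℕ :=
    (Finset.range (d + 1)).filter (fun i => 𝒯.STrace S (𝒯.parent^[i] m) = (L, X, R))
  have hF : ∀ i, i ∈ F ↔ i ≤ d ∧ 𝒯.STrace S (𝒯.parent^[i] m) = (L, X, R) := by
    intro i
    simp [F, Nat.lt_succ_iff]
  have hne : F.Nonempty := by
    obtain ⟨t, ht⟩ := hN
    obtain ⟨i, hi, rfl⟩ := hle t ht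
    exact ⟨i, (hF i).2 ⟨hi, ht⟩⟩
  obtain ⟨a, ha, hamin⟩ := F.exists_min_image id hne
  obtain ⟨b, hb, hbmax⟩ := F.exists_max_image id hne
  simp only [id] at hamin hbmax
  have hab : a ≤ b := hamin b hb
  rw [hF] at ha hb
  refine ⟨𝒯.parent^[a] m, b - a, ?_, ?_⟩
  · intro i j hi hj he
    rw [← Function.iterate_add_apply, ← Function.iterate_add_apply] at he
    rcases lt_trichotomy i j with h | h | h
    · exact absurd he (hinj _ _ (by omega) (by omega))
    · exact h
    · exact absurd he.symm (hinj _ _ (by omega) (by omega))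
  · intro t
    constructor
    · intro ht
      obtain ⟨i, hi, rfl⟩ := hle t ht
      have hiF := (hF i).2 ⟨hi, ht⟩
      have h1 := hamin i hiF
      have h2 := hbmax i hiF
      refine ⟨i - a, by omega, ?_⟩
      rw [← Function.iterate_add_apply, Nat.sub_add_cancel h1]
    · rintro ⟨i, hi, rfl⟩
      rw [← ha.2]
      refine RootedTreeDecomp.aux_convex 𝒯 S (b := 𝒯.parent^[b] m) ⟨i, rfl⟩ ⟨b - a - i, ?_⟩
        (ha.2.trans hb.2.symm)
      rw [← Function.iterate_add_apply, ← Function.iterate_add_apply]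
      congr 2
      omega
end

section
/- Let 𝒯 be a rooted tree decomposition of a graph G=(V,E), let S ⊆ V, and let (L^S, X^S, R^S) be an S-trace with L^S ≠ ∅ that occurs in 𝒯, with directed path running from the top node t_max to the bottom node t_min. If t_max has a parent, then this parent is an S-bottom node. -/
namespace RootedTreeDecomp

variable {V ι : Type} {G : SimpleGraph V}

theorem iter_root (𝒯 : RootedTreeDecomp V ι G) (n : ℕ) : 𝒯.parent^[n] 𝒯.root = 𝒯.root :=
  Function.iterate_fixed 𝒯.parent_root n

theorem inSubtree_trans (𝒯 : RootedTreeDecomp V ι G) {a b c : ι}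
    (h₁ : 𝒯.InSubtree a b) (h₂ : 𝒯.InSubtree b c) : 𝒯.InSubtree a c := by
  obtain ⟨n, rfl⟩ := h₁
  obtain ⟨k, rfl⟩ := h₂
  exact ⟨n + k, Function.iterate_add_apply _ _ _ _⟩

theorem root_of_cycle (𝒯 : RootedTreeDecomp V ι G) {a : ι} {n : ℕ} (hn : 0 < n)
    (h : 𝒯.parent^[n] a = a) : a = 𝒯.root := by
  obtain ⟨k, hk⟩ := 𝒯.reaches_root a
  have h1 : 𝒯.parent^[n * k] a = a := by
    rw [Function.iterate_mul]
    exact Function.iterate_fixed h k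
  have h2 : n * k = (n * k - k) + k := by
    have : k ≤ n * k := Nat.le_mul_of_pos_left k hn
    omega
  rw [h2, Function.iterate_add_apply, hk, iter_root] at h1
  exact h1.symm

theorem inSubtree_antisymm (𝒯 : RootedTreeDecomp V ι G) {a b : ι}
    (h₁ : 𝒯.InSubtree a b) (h₂ : 𝒯.InSubtree b a) : a = b := by
  obtain ⟨n, hn⟩ := h₁
  obtain ⟨k, hk⟩ := h₂
  rcases Nat.eq_zero_or_pos (n + k) with h | h
  · have : n = 0 := by omega
    subst this
    exact hn.symm
  · have ha : a = 𝒯.root := by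
      apply 𝒯.root_of_cycle h
      rw [Function.iterate_add_apply, hk, hn]
    rw [ha, iter_root] at hk
    rw [ha, hk]

theorem inSubtree_total (𝒯 : RootedTreeDecomp V ι G) {a b m : ι}
    (h₁ : 𝒯.InSubtree a m) (h₂ : 𝒯.InSubtree b m) : 𝒯.InSubtree a b ∨ 𝒯.InSubtree b a := by
  obtain ⟨n, rfl⟩ := h₁
  obtain ⟨k, rfl⟩ := h₂
  rcases le_total n k with h | h
  · right
    exact ⟨k - n, by rw [← Function.iterate_add_apply, Nat.sub_add_cancel h]⟩
  · left
    exact ⟨n - k, by rw [← Function.iterate_add_apply, Nat.sub_add_cancel h]⟩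

theorem Vt_mono (𝒯 : RootedTreeDecomp V ι G) {a b : ι} (h : 𝒯.InSubtree a b) :
    𝒯.Vt b ⊆ 𝒯.Vt a := by
  rintro v ⟨s, hs, hv⟩
  exact ⟨s, 𝒯.inSubtree_trans h hs, hv⟩

theorem exists_top (𝒯 : RootedTreeDecomp V ι G) (v : V) : ∃ m, v ∈ 𝒯.bag m ∧
    (∀ t, v ∈ 𝒯.bag t → 𝒯.InSubtree m t) ∧ ∀ t, v ∈ 𝒯.Lt t → 𝒯.InSubtree t m := by
  obtain ⟨m, hm, h⟩ := 𝒯.bags_connected v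
  refine ⟨m, hm, fun t ht => ?_, ?_⟩
  · obtain ⟨n, hn, -⟩ := h t ht
    exact ⟨n, hn⟩
  · rintro t ⟨⟨s, ⟨k, hk⟩, hs⟩, hvt⟩
    obtain ⟨n, hn, hall⟩ := h s hs
    rcases le_total k n with hkn | hkn
    · exact absurd (hk ▸ hall k hkn) hvt
    · exact ⟨k - n, by rw [← hn, ← Function.iterate_add_apply, Nat.sub_add_cancel hkn, hk]⟩

theorem Lt_mono (𝒯 : RootedTreeDecomp V ι G) {a b : ι} (h : 𝒯.InSubtree a b) :
    𝒯.Lt b ⊆ 𝒯.Lt a := by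
  intro v hv
  refine ⟨𝒯.Vt_mono h hv.1, fun hva => ?_⟩
  obtain ⟨m, hm, h1, h2⟩ := 𝒯.exists_top v
  have e : m = b := 𝒯.inSubtree_antisymm (𝒯.inSubtree_trans (h1 a hva) h) (h2 b hv)
  exact hv.2 (e ▸ hm)

theorem bag_subset_Vt (𝒯 : RootedTreeDecomp V ι G) (t : ι) : 𝒯.bag t ⊆ 𝒯.Vt t :=
  fun _ hv => ⟨t, ⟨0, rfl⟩, hv⟩

theorem XS_eq (𝒯 : RootedTreeDecomp V ι G) (S : Set V) (t : ι) :
    𝒯.XS S t = S \ (𝒯.LS S t ∪ 𝒯.RS S t) := by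
  ext v
  have := @bag_subset_Vt _ _ _ 𝒯 t v
  simp only [XS, LS, RS, Lt, Rt, Set.mem_inter_iff, Set.mem_diff, Set.mem_union,
    Set.mem_compl_iff]
  tauto

end RootedTreeDecomp

/-- If `tmax` is the top node of the directed path of an `S`-trace
with nonempty `L`-part and `tmax` has a parent, then this parent is an `S`-bottom
node. -/
theorem statement3 {V ι : Type} [Fintype V] [DecidableEq V] {G : SimpleGraph V}
    (𝒯 : RootedTreeDecomp V ι G) (S : Set V) (tmax : ι)
    (hL : (𝒯.LS S tmax).Nonempty)
    (htop : ∀ t', 𝒯.STrace S t' = 𝒯.STrace S tmax → 𝒯.InSubtree tmax t')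
    (hroot : tmax ≠ 𝒯.root) :
    𝒯.IsSBottom S (𝒯.parent tmax) := by
  have hp : 𝒯.InSubtree (𝒯.parent tmax) tmax := ⟨1, rfl⟩
  have hne : 𝒯.STrace S (𝒯.parent tmax) ≠ 𝒯.STrace S tmax := by
    intro h
    obtain ⟨n, hn⟩ := htop _ h
    exact hroot (𝒯.root_of_cycle (n := n + 1) (Nat.succ_pos n) hn)
  obtain ⟨v, hv⟩ := hL
  refine ⟨⟨v, 𝒯.Lt_mono hp hv.1, hv.2⟩, fun t' ht' => ?_⟩
  have hLe : 𝒯.LS S t' = 𝒯.LS S (𝒯.parent tmax) := congrArg Prod.fst ht'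
  have hRe : 𝒯.RS S t' = 𝒯.RS S (𝒯.parent tmax) := congrArg (fun x => x.2.2) ht'
  have hvt : v ∈ 𝒯.LS S t' := hLe ▸ ⟨𝒯.Lt_mono hp hv.1, hv.2⟩
  obtain ⟨m, -, -, hm⟩ := 𝒯.exists_top v
  have key : ¬ 𝒯.InSubtree tmax t' := by
    intro h
    apply hne
    have e1 : 𝒯.LS S (𝒯.parent tmax) = 𝒯.LS S tmax := by
      apply Set.Subset.antisymm
      · rw [← hLe]
        exact Set.inter_subset_inter_left _ (𝒯.Lt_mono h)
      · exact Set.inter_subset_inter_left _ (𝒯.Lt_mono hp)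
    have e2 : 𝒯.RS S (𝒯.parent tmax) = 𝒯.RS S tmax := by
      apply Set.Subset.antisymm
      · exact Set.inter_subset_inter_left _ (Set.compl_subset_compl.2 (𝒯.Vt_mono hp))
      · rw [← hRe]
        exact Set.inter_subset_inter_left _ (Set.compl_subset_compl.2 (𝒯.Vt_mono h))
    simp only [RootedTreeDecomp.STrace, RootedTreeDecomp.XS_eq, e1, e2]
  rcases 𝒯.inSubtree_total (hm _ hvt.1) (hm _ hv.1) with ⟨n, hn⟩ | h
  · cases n with
    | zero => exact absurd ⟨0, hn.symm⟩ key
    | succ n => exact ⟨n, hn⟩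
  · exact absurd h key
end
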